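/- The countable power R_S^ω of the Sorgenfrey line and the countable power I_S^ω of the irrational Sorgenfrey line have a π-tree. -/

import Mathlib

open Set

universe u v

/-- A family `γ` π-refines `δ`: every nonempty member of `δ` contains a
nonempty member of `γ`. -/
def PiRefines {α : Type*} (γ δ : Set (Set α)) : Prop :=
  ∀ D ∈ δ, D.Nonempty → ∃ G ∈ γ, G.Nonempty ∧ G ⊆ D

/-- The finite intersection property. -/
def HasFIP {α : Type*} (γ : Set (Set α)) : Prop :=
  ∀ δ : Set (Set α), δ ⊆ γ → δ.Finite → δ.Nonempty → (⋂₀ δ).Nonempty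

/-- `cofin A` is the family of complements in `A` of finite subsets of `A`. -/
def cofin (A : Set ℕ) : Set (Set ℕ) :=
  {B | ∃ C : Set ℕ, C.Finite ∧ C ⊆ A ∧ B = A \ C}

/-- A foliage tree on `X`: a set-theoretic tree (strict partial order with
well-ordered sets of strict predecessors) with a leaf (a subset of `X`)
attached to each node. -/
structure FoliageTree (X : Type u) where
  Node : Type
  lt : Node → Node → Prop
  lt_irrefl : ∀ a, ¬ lt a a
  lt_trans : ∀ {a b c}, lt a b → lt b c → lt a c
  wellOrdered : ∀ a : Node, IsWellOrder {b : Node // lt b a} fun x y => lt x.1 y.1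
  leaf : Node → Set X

/-- Strict proper-extension order on finite sequences of naturals. -/
def seqLT (a b : List ℕ) : Prop := a <+: b ∧ a ≠ b

namespace FoliageTree

variable {X : Type u}

/-- The sons (immediate successors) of a node. -/
def Sons (F : FoliageTree X) (x : F.Node) : Set F.Node :=
  {s | F.lt x s ∧ ¬ ∃ t, F.lt x t ∧ F.lt t s}

/-- A node is maximal if it has no strict successor. -/
def IsMaxNode (F : FoliageTree X) (x : F.Node) : Prop := ¬ ∃ s, F.lt x s

/-- A chain of nodes. -/
def IsChainN (F : FoliageTree X) (C : Set F.Node) : Prop :=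
  ∀ x ∈ C, ∀ y ∈ C, F.lt x y ∨ x = y ∨ F.lt y x

/-- A branch is a maximal chain. -/
def IsBranch (F : FoliageTree X) (B : Set F.Node) : Prop :=
  F.IsChainN B ∧ ∀ C, F.IsChainN C → B ⊆ C → B = C

/-- The height of a node: the order type of its set of strict predecessors. -/
noncomputable def height (F : FoliageTree X) (v : F.Node) : Ordinal :=
  @Ordinal.type {b : F.Node // F.lt b v} (fun x y => F.lt x.1 y.1) (F.wellOrdered v)

/-- `shoot F v`: unions of leaves over cofinite sets of sons of `v`. -/
def shoot (F : FoliageTree X) (v : F.Node) : Set (Set X) :=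
  {S | ∃ C : Set F.Node, C ⊆ F.Sons v ∧ (F.Sons v \ C).Finite ∧ S = ⋃ s ∈ C, F.leaf s}

/-- `scope F p`: the nodes whose leaf contains `p`. -/
def scope (F : FoliageTree X) (p : X) : Set F.Node := {x | p ∈ F.leaf x}

/-- The union of all leaves. -/
def flesh (F : FoliageTree X) : Set X := ⋃ x, F.leaf x

/-- `F` is a foliage `ω,ω`-tree: its skeleton is order-isomorphic to
`(ω^{<ω}, ⊂)`. -/
def IsOmegaOmegaTree (F : FoliageTree X) : Prop := Nonempty (F.lt ≃r seqLT)

/-- `F` is locally strict: the leaf of every non-maximal node is the disjoint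
union of the leaves of its sons. -/
def LocallyStrict (F : FoliageTree X) : Prop :=
  ∀ x, ¬ F.IsMaxNode x →
    F.leaf x = (⋃ s ∈ F.Sons x, F.leaf s) ∧
      ∀ s ∈ F.Sons x, ∀ t ∈ F.Sons x, s ≠ t → Disjoint (F.leaf s) (F.leaf t)

/-- `F` has strict branches: it has nodes, and along every branch the
intersection of the leaves is a singleton. -/
def StrictBranches (F : FoliageTree X) : Prop :=
  Nonempty F.Node ∧ ∀ B, F.IsBranch B → ∃ p, (⋂ x ∈ B, F.leaf x) = {p}

/-- `r` is the root: the least node. -/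
def IsRoot (F : FoliageTree X) (r : F.Node) : Prop := ∀ x, r = x ∨ F.lt r x

/-- All leaves are open. -/
def OpenIn [TopologicalSpace X] (F : FoliageTree X) : Prop := ∀ x, IsOpen (F.leaf x)

/-- `F` is a Baire foliage tree on `X`. -/
def IsBaireFoliageTree [TopologicalSpace X] (F : FoliageTree X) : Prop :=
  F.OpenIn ∧ F.LocallyStrict ∧ F.IsOmegaOmegaTree ∧ F.StrictBranches ∧
    ∃ r, F.IsRoot r ∧ F.leaf r = Set.univ

/-- `F` grows into `X`. -/
def GrowsInto [TopologicalSpace X] (F : FoliageTree X) : Prop :=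
  ∀ p : X, ∀ U ∈ nhds p, ∃ z ∈ F.scope p, PiRefines (F.shoot z) {U}

/-- `F` is a π-tree on `X`. -/
def IsPiTree [TopologicalSpace X] (F : FoliageTree X) : Prop :=
  F.IsBaireFoliageTree ∧ F.GrowsInto

/-- `rise F p U`: the set of (finite) heights of nodes `v` whose leaf contains
`p` and whose shoot π-refines `{U}`. -/
noncomputable def rise (F : FoliageTree X) (p : X) (U : Set X) : Set ℕ :=
  {n | ∃ v ∈ F.scope p, PiRefines (F.shoot v) {U} ∧ F.height v = (n : Ordinal)}

/-- `Rise F`: all sets `rise F p U` for `p ∈ X` and `U` a neighbourhood of `p`. -/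
def Rise [TopologicalSpace X] (F : FoliageTree X) : Set (Set ℕ) :=
  {R | ∃ p U, U ∈ nhds p ∧ R = F.rise p U}

end FoliageTree

/-- The Sorgenfrey line: the reals with the topology generated by the
half-open intervals `[a, b)`. -/
def SorgLine : Type := ℝ

instance : TopologicalSpace SorgLine :=
  TopologicalSpace.generateFrom {s : Set ℝ | ∃ a b : ℝ, s = Set.Ico a b}

/-- The set of irrational points of the Sorgenfrey line; the irrational
Sorgenfrey line is the corresponding subspace. -/
def IrrSorg : Set SorgLine := {x : SorgLine | Irrational (show ℝ from x)}


/-! ### The ultrametric-type IFS coding -/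

section IFS

/-- Data of an increasing iterated function system coding a set `Y ⊆ [0,1)`. -/
structure IFS (Y : Set ℝ) (g : ℕ × ℕ → ℝ → ℝ) : Prop where
  hY : Y ⊆ Ico 0 1
  hmap : ∀ d, ∀ w ∈ Icc (0:ℝ) 1, g d w ∈ Ico (0:ℝ) 1
  hmono : ∀ d, StrictMonoOn (g d) (Icc 0 1)
  hcontr : ∀ d, ∀ u ∈ Icc (0:ℝ) 1, ∀ w ∈ Icc (0:ℝ) 1, |g d u - g d w| ≤ 2⁻¹ * |u - w|
  hcov : ∀ y ∈ Y, ∃ d, ∃ w ∈ Y, g d w = y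
  hinj : ∀ d d', ∀ w ∈ Y, ∀ w' ∈ Y, g d w = g d' w' → d = d'
  hback : ∀ d, ∀ w ∈ Icc (0:ℝ) 1, w < 1 → g d w ∈ Y → w ∈ Y
  hcorner : ∀ t < (1:ℝ), ∃ K, ∀ d : ℕ × ℕ, K ≤ d.1 → ∀ w ∈ Y, t ≤ g d w
  hlim : ∀ (d : ℕ → ℕ × ℕ) (x : ℕ → ℝ),
    (∀ n, x n ∈ Icc (0:ℝ) 1) → (∀ n, x n = g (d n) (x (n+1))) → x 0 ∈ Y

/-- compositions -/
def compG (g : ℕ × ℕ → ℝ → ℝ) (d : ℕ → ℕ × ℕ) : ℕ → ℝ → ℝ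
  | 0, w => w
  | n + 1, w => compG g d n (g (d n) w)

variable {Y : Set ℝ} {g : ℕ × ℕ → ℝ → ℝ}

open Classical in
/-- first digit -/
noncomputable def dig (Y : Set ℝ) (g : ℕ × ℕ → ℝ → ℝ) (y : ℝ) : ℕ × ℕ :=
  if h : ∃ d, ∃ w ∈ Y, g d w = y then h.choose else 0

open Classical in
/-- shift -/
noncomputable def shf (Y : Set ℝ) (g : ℕ × ℕ → ℝ → ℝ) (y : ℝ) : ℝ :=
  if h : ∃ w, w ∈ Y ∧ g (dig Y g y) w = y then h.choose else 0

/-- the code -/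
noncomputable def code (Y : Set ℝ) (g : ℕ × ℕ → ℝ → ℝ) (y : ℝ) (n : ℕ) : ℕ × ℕ :=
  dig Y g ((shf Y g)^[n] y)

namespace IFS

theorem icc (H : IFS Y g) {y : ℝ} (hy : y ∈ Y) : y ∈ Icc (0:ℝ) 1 :=
  Ico_subset_Icc_self (H.hY hy)

theorem shf_spec (H : IFS Y g) {y : ℝ} (hy : y ∈ Y) :
    shf Y g y ∈ Y ∧ g (dig Y g y) (shf Y g y) = y := by
  have h1 := H.hcov y hy
  have h2 : ∃ w, w ∈ Y ∧ g (dig Y g y) w = y := by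
    have := h1.choose_spec
    simpa only [dig, dif_pos h1] using this
  have := h2.choose_spec
  simpa only [shf, dif_pos h2] using this

theorem dig_eq (H : IFS Y g) {d : ℕ × ℕ} {w : ℝ} (hw : w ∈ Y) (hy : g d w ∈ Y) :
    dig Y g (g d w) = d ∧ shf Y g (g d w) = w := by
  obtain ⟨h1, h2⟩ := H.shf_spec hy
  have h3 := H.hinj _ _ _ h1 _ hw h2
  refine ⟨h3, ?_⟩
  rw [h3] at h2
  exact (H.hmono d).injOn (H.icc h1) (H.icc hw) h2

theorem iter_mem (H : IFS Y g) {y : ℝ} (hy : y ∈ Y) (n : ℕ) : (shf Y g)^[n] y ∈ Y := by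
  induction n with
  | zero => simpa
  | succ n ih => rw [Function.iterate_succ_apply']; exact (H.shf_spec ih).1

theorem compG_code (H : IFS Y g) {y : ℝ} (hy : y ∈ Y) (n : ℕ) :
    compG g (code Y g y) n ((shf Y g)^[n] y) = y := by
  induction n with
  | zero => simp [compG]
  | succ n ih =>
    rw [Function.iterate_succ_apply', compG]
    conv_rhs => rw [← ih]
    congr 1
    exact (H.shf_spec (H.iter_mem hy n)).2

theorem compG_congr {d d' : ℕ → ℕ × ℕ} {n : ℕ} (h : ∀ i < n, d i = d' i) :
    compG g d n = compG g d' n := by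
  induction n with
  | zero => rfl
  | succ n ih =>
    funext w
    simp only [compG]
    rw [ih (fun i hi => h i (by omega)), h n (by omega)]

theorem compG_map (H : IFS Y g) (d : ℕ → ℕ × ℕ) (n : ℕ) {w : ℝ} (hw : w ∈ Icc (0:ℝ) 1) :
    compG g d n w ∈ Icc (0:ℝ) 1 := by
  induction n generalizing w with
  | zero => exact hw
  | succ n ih => exact ih (Ico_subset_Icc_self (H.hmap _ _ hw))

theorem compG_mono (H : IFS Y g) (d : ℕ → ℕ × ℕ) (n : ℕ) :
    StrictMonoOn (compG g d n) (Icc 0 1) := by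
  induction n with
  | zero => intro a _ b _ h; exact h
  | succ n ih =>
    intro a ha b hb h
    exact ih (Ico_subset_Icc_self (H.hmap _ _ ha)) (Ico_subset_Icc_self (H.hmap _ _ hb))
      (H.hmono _ ha hb h)

theorem compG_contr (H : IFS Y g) (d : ℕ → ℕ × ℕ) (n : ℕ) {u w : ℝ} (hu : u ∈ Icc (0:ℝ) 1)
    (hw : w ∈ Icc (0:ℝ) 1) : |compG g d n u - compG g d n w| ≤ 2⁻¹ ^ n * |u - w| := by
  induction n generalizing u w with
  | zero => simp [compG]
  | succ n ih =>
    simp only [compG]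
    refine (ih (Ico_subset_Icc_self (H.hmap _ _ hu)) (Ico_subset_Icc_self (H.hmap _ _ hw))).trans ?_
    rw [pow_succ, mul_assoc]
    exact mul_le_mul_of_nonneg_left (H.hcontr _ _ hu _ hw) (by positivity)

theorem compG_cont (H : IFS Y g) (d : ℕ → ℕ × ℕ) (n : ℕ) :
    ContinuousOn (compG g d n) (Icc 0 1) := by
  have : LipschitzOnWith 1 (compG g d n) (Icc 0 1) := by
    refine LipschitzOnWith.of_dist_le_mul fun u hu w hw => ?_
    simp only [Real.dist_eq, NNReal.coe_one]
    refine (H.compG_contr d n hu hw).trans ?_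
    exact mul_le_mul_of_nonneg_right (pow_le_one₀ (by norm_num) (by norm_num)) (abs_nonneg _)
  exact this.continuousOn

theorem dist_le (H : IFS Y g) {x y : ℝ} (hx : x ∈ Y) (hy : y ∈ Y) {n : ℕ}
    (h : ∀ i < n, code Y g x i = code Y g y i) : |x - y| ≤ 2⁻¹ ^ n := by
  have h1 := H.compG_code hx n
  have h2 := H.compG_code hy n
  rw [compG_congr h] at h1
  have h3 := H.icc (H.iter_mem hx n)
  have h4 := H.icc (H.iter_mem hy n)
  have := H.compG_contr (code Y g y) n h3 h4
  rw [h1, h2] at this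
  refine this.trans ?_
  have h5 : |(shf Y g)^[n] x - (shf Y g)^[n] y| ≤ 1 := by
    rw [abs_le]; constructor <;> linarith [h3.1, h3.2, h4.1, h4.2]
  exact mul_le_of_le_one_right (by positivity) h5

theorem code_inj (H : IFS Y g) {x y : ℝ} (hx : x ∈ Y) (hy : y ∈ Y)
    (h : code Y g x = code Y g y) : x = y := by
  have h1 : |x - y| ≤ 0 := by
    refine ge_of_tendsto' (tendsto_pow_atTop_nhds_zero_of_lt_one (r := (2⁻¹ : ℝ))
      (by norm_num) (by norm_num)) fun n => H.dist_le hx hy fun i _ => by rw [h]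
  have := abs_nonpos_iff.1 h1
  linarith

theorem code_surj (H : IFS Y g) (d : ℕ → ℕ × ℕ) : ∃ x ∈ Y, code Y g x = d := by
  have hne : (⋂ n, compG g d n '' Icc 0 1).Nonempty := by
    refine IsCompact.nonempty_iInter_of_sequence_nonempty_isCompact_isClosed _ ?_ ?_ ?_ ?_
    · rintro n _ ⟨w, hw, rfl⟩
      exact ⟨_, Ico_subset_Icc_self (H.hmap _ _ hw), rfl⟩
    · intro n; exact ⟨_, 0, by simp, rfl⟩
    · exact isCompact_Icc.image_of_continuousOn (H.compG_cont d 0)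
    · intro n; exact (isCompact_Icc.image_of_continuousOn (H.compG_cont d n)).isClosed
  obtain ⟨x, hx⟩ := hne
  rw [mem_iInter] at hx
  choose w hw hwx using hx
  have hstep : ∀ n, w n = g (d n) (w (n+1)) := fun n =>
    (H.compG_mono d n).injOn (hw n) (Ico_subset_Icc_self (H.hmap _ _ (hw _)))
      ((hwx n).trans (hwx (n+1)).symm)
  have hwY : ∀ n, w n ∈ Y := fun n => by
    simpa using H.hlim (fun k => d (n+k)) (fun k => w (n+k)) (fun k => hw _) (fun k => hstep _)
  have hds : ∀ n, dig Y g (w n) = d n ∧ shf Y g (w n) = w (n+1) := fun n => by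
    have h1 := hwY n
    rw [hstep n] at h1 ⊢
    exact H.dig_eq (hwY _) h1
  have hit : ∀ n, (shf Y g)^[n] (w 0) = w n := by
    intro n
    induction n with
    | zero => rfl
    | succ n ih => rw [Function.iterate_succ_apply', ih, (hds n).2]
  refine ⟨w 0, hwY 0, ?_⟩
  funext n
  rw [code, hit, (hds n).1]

theorem code_compG (H : IFS Y g) (d : ℕ → ℕ × ℕ) (n : ℕ) {w : ℝ} (hw : w ∈ Icc (0:ℝ) 1)
    (hw1 : w < 1) (h : compG g d n w ∈ Y) :
    w ∈ Y ∧ (∀ i < n, code Y g (compG g d n w) i = d i) ∧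
      (shf Y g)^[n] (compG g d n w) = w := by
  induction n generalizing w with
  | zero => exact ⟨h, by simp, rfl⟩
  | succ n ih =>
    have hm := H.hmap (d n) w hw
    obtain ⟨h1, h2, h3⟩ := ih (Ico_subset_Icc_self hm) hm.2 h
    have hwY := H.hback _ _ hw hw1 h1
    obtain ⟨h4, h5⟩ := H.dig_eq hwY h1
    refine ⟨hwY, ?_, ?_⟩
    · intro i hi
      rcases Nat.lt_succ_iff_lt_or_eq.1 hi with hi | rfl
      · exact h2 i hi
      · simp only [code, compG]; rw [h3, h4]
    · rw [Function.iterate_succ_apply']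
      simp only [compG]; rw [h3, h5]

/-- cylinders are right-open -/
theorem cyl_open (H : IFS Y g) {p : ℝ} (hp : p ∈ Y) (n : ℕ) :
    ∃ ε > 0, p + ε ≤ 1 ∧ ∀ x ∈ Y, p ≤ x → x < p + ε →
      ∀ i < n, code Y g x i = code Y g p i := by
  set c := code Y g p with hc
  have h1 := H.compG_code hp n
  set t := (shf Y g)^[n] p with ht
  have htY : t ∈ Y := H.iter_mem hp n
  have ht1 := H.hY htY
  have h11 : (1:ℝ) ∈ Icc (0:ℝ) 1 := by simp
  have hlt : p < compG g c n 1 := by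
    rw [← h1]; exact H.compG_mono c n (H.icc htY) h11 ht1.2
  refine ⟨compG g c n 1 - p, by linarith, by linarith [(H.compG_map c n h11).2], ?_⟩
  intro x hx hpx hxp
  have hsub : Icc t 1 ⊆ Icc 0 1 := Icc_subset_Icc ht1.1 le_rfl
  have hivt := intermediate_value_Icc ht1.2.le ((H.compG_cont c n).mono hsub)
  obtain ⟨w, hw, hwx⟩ := hivt (show x ∈ Icc (compG g c n t) (compG g c n 1) from
    ⟨by rw [h1]; exact hpx, by linarith⟩)
  have hw1 : w < 1 := by
    rcases hw.2.lt_or_eq with h | h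
    · exact h
    · subst h; linarith
  have := H.code_compG c n (hsub hw) hw1 (by rw [hwx]; exact hx)
  rw [hwx] at this
  exact this.2.1

theorem corner (H : IFS Y g) {p : ℝ} (hp : p ∈ Y) (n : ℕ) :
    ∃ K, ∀ x ∈ Y, (∀ i < n, code Y g x i = code Y g p i) → K ≤ (code Y g x n).1 → p ≤ x := by
  have hq := H.iter_mem hp n
  obtain ⟨K, hK⟩ := H.hcorner _ (H.hY hq).2
  refine ⟨K, fun x hx hi hk => ?_⟩
  have h1 := H.compG_code hx n
  rw [compG_congr hi] at h1
  rw [← h1, ← H.compG_code hp n]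
  have hxq := H.iter_mem hx n
  rw [H.compG_code hp n]
  conv_lhs => rw [← H.compG_code hp n]
  refine (H.compG_mono _ n).monotoneOn (H.icc hq) (H.icc hxq) ?_
  have h3 := H.shf_spec hxq
  have := hK _ hk _ h3.1
  unfold code at this
  rwa [h3.2] at this

end IFS
end IFS

/-! ### Coding one factor -/

/-- `e` is a good coding of the space `S`. -/
structure GoodCode {S : Type*} [TopologicalSpace S] (e : S → ℕ → ℕ × ℕ) : Prop where
  bij : Function.Bijective e
  cyl : ∀ p n, {x | ∀ i < n, e x i = e p i} ∈ nhds p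
  corner : ∀ p, ∀ U ∈ nhds p, ∃ N, ∀ n ≥ N, ∃ K, ∀ x, (∀ i < n, e x i = e p i) →
    K ≤ (e x n).1 → x ∈ U

theorem exists_goodCode {Y : Set ℝ} {g : ℕ × ℕ → ℝ → ℝ} (H : IFS Y g)
    {S : Type*} [TopologicalSpace S] (v : S → ℝ) (hv : Function.Injective v)
    (hr : ∀ x, x ∈ range v ↔ Int.fract x ∈ Y)
    (hn : ∀ p U, U ∈ nhds p ↔ ∃ ε > 0, ∀ x, v p ≤ v x → v x < v p + ε → x ∈ U) :
    ∃ e : S → ℕ → ℕ × ℕ, GoodCode e := by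
  obtain ⟨z⟩ : Nonempty (ℤ ≃ ℕ × ℕ) := ⟨Denumerable.equiv₂ _ _⟩
  have hf : ∀ x, Int.fract (v x) ∈ Y := fun x => (hr _).1 ⟨x, rfl⟩
  let e : S → ℕ → ℕ × ℕ := fun x n =>
    Nat.casesOn n (z ⌊v x⌋) (fun m => code Y g (Int.fract (v x)) m)
  have e0 : ∀ x, e x 0 = z ⌊v x⌋ := fun _ => rfl
  have e1 : ∀ x n, e x (n+1) = code Y g (Int.fract (v x)) n := fun _ _ => rfl
  clear_value e
  refine ⟨e, ⟨?_, ?_⟩, ?_, ?_⟩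
  · intro x y hxy
    apply hv
    have h0 := congrFun hxy 0
    rw [e0, e0] at h0
    have h1 : code Y g (Int.fract (v x)) = code Y g (Int.fract (v y)) := by
      funext n; rw [← e1, ← e1, hxy]
    rw [← Int.floor_add_fract (v x), ← Int.floor_add_fract (v y), z.injective h0,
      H.code_inj (hf x) (hf y) h1]
  · intro d
    obtain ⟨y, hy, hyd⟩ := H.code_surj (fun n => d (n+1))
    have hy1 := H.hY hy
    have hfr : Int.fract ((z.symm (d 0) : ℤ) + y) = y := by
      rw [Int.fract_intCast_add]; exact Int.fract_eq_self.2 hy1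
    have hfl : ⌊((z.symm (d 0) : ℤ) : ℝ) + y⌋ = z.symm (d 0) := by
      rw [Int.floor_intCast_add, Int.floor_eq_zero_iff.2 hy1, add_zero]
    obtain ⟨x, hx⟩ := (hr ((z.symm (d 0) : ℤ) + y)).2 (by rw [hfr]; exact hy)
    refine ⟨x, ?_⟩
    funext n
    cases n with
    | zero => rw [e0, hx, hfl]; simp
    | succ n => rw [e1, hx, hfr, hyd]
  · intro p n
    rw [hn]
    obtain ⟨ε, hε, hε1, h⟩ := H.cyl_open (hf p) n
    refine ⟨ε, hε, fun x h1 h2 => ?_⟩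
    have hfl : ⌊v x⌋ = ⌊v p⌋ := by
      rw [Int.floor_eq_iff]
      have := Int.floor_add_fract (v p)
      have := Int.fract_nonneg (v p)
      constructor <;> linarith
    have hfx := Int.floor_add_fract (v x)
    have hfp := Int.floor_add_fract (v p)
    rw [hfl] at hfx
    intro i hi
    cases i with
    | zero => rw [e0, e0, hfl]
    | succ i =>
      rw [e1, e1]
      exact h _ (hf x) (by linarith) (by linarith) i (by omega)
  · intro p U hU
    obtain ⟨ε, hε, h⟩ := (hn p U).1 hU
    obtain ⟨N, hN⟩ := exists_pow_lt_of_lt_one hε (show (2⁻¹:ℝ) < 1 by norm_num)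
    refine ⟨N + 1, fun n hnN => ?_⟩
    obtain ⟨m, rfl⟩ : ∃ m, n = m + 1 := ⟨n - 1, by omega⟩
    obtain ⟨K, hK⟩ := H.corner (hf p) m
    refine ⟨K, fun x hx hKx => ?_⟩
    have hc : ∀ i < m, code Y g (Int.fract (v x)) i = code Y g (Int.fract (v p)) i := fun i hi => by
      rw [← e1, ← e1]; exact hx _ (by omega)
    have hfl : ⌊v x⌋ = ⌊v p⌋ := z.injective (by rw [← e0, ← e0]; exact hx 0 (by omega))
    have hd := H.dist_le (hf x) (hf p) hc
    have hle := hK _ (hf x) hc (by rw [← e1]; exact hKx)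
    have hpw : (2⁻¹:ℝ) ^ m ≤ 2⁻¹ ^ N :=
      pow_le_pow_of_le_one (by norm_num) (by norm_num) (by omega)
    have hfx := Int.floor_add_fract (v x)
    have hfp := Int.floor_add_fract (v p)
    rw [hfl] at hfx
    have := (abs_le.1 hd).2
    exact h x (by linarith) (by linarith)

/-! ### Coding the countable power -/

theorem exists_sigma (n : ℕ) : ∃ σ : (Fin (n+1) → ℕ × ℕ) ≃ ℕ × ℕ, ∀ w i, (σ w).1 ≤ (w i).1 := by
  let f : (Fin (n+1) → ℕ × ℕ) → ℕ := fun w => Finset.univ.inf' Finset.univ_nonempty fun i => (w i).1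
  have hinf : ∀ k, Infinite {w // f w = k} := fun k => by
    refine Infinite.of_injective (fun j : ℕ => (⟨fun _ => (k, j), by simp [f]⟩ : {w // f w = k})) ?_
    intro a b hab
    have := congrFun (congrArg Subtype.val hab) 0
    exact (Prod.ext_iff.1 this).2
  have hden : ∀ k, Nonempty ({w // f w = k} ≃ ℕ) := fun k => by
    have := hinf k
    exact ⟨(nonempty_denumerable _).some.eqv⟩
  let τ := fun k => (hden k).some
  refine ⟨(Equiv.sigmaFiberEquiv f).symm.trans
    ((Equiv.sigmaCongrRight τ).trans (Equiv.sigmaEquivProd ℕ ℕ)), fun w i => ?_⟩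
  change f w ≤ _
  exact Finset.inf'_le (fun i => (w i).1) (Finset.mem_univ i)

/-- Condition on a coding by sequences of naturals giving a π-tree. -/
structure PiCode {X : Type*} [TopologicalSpace X] (E : X → ℕ → ℕ) : Prop where
  bij : Function.Bijective E
  cyl : ∀ p n, {x | ∀ i < n, E x i = E p i} ∈ nhds p
  corner : ∀ p, ∀ U ∈ nhds p, ∃ n K, ∀ x, (∀ i < n, E x i = E p i) → K ≤ E x n → x ∈ U

theorem exists_piCode {S : Type*} [TopologicalSpace S] {e : S → ℕ → ℕ × ℕ} (h : GoodCode e) :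
    ∃ E : (ℕ → S) → ℕ → ℕ, PiCode E := by
  choose σ hσ using exists_sigma
  let E1 : (ℕ → S) → ℕ → ℕ × ℕ := fun x n => σ n fun i => e (x i) (n - i)
  have hE1 : ∀ x y n, E1 x n = E1 y n ↔ ∀ i ≤ n, e (x i) (n - i) = e (y i) (n - i) := by
    intro x y n
    simp only [E1, (σ n).injective.eq_iff]
    constructor
    · intro h i hi; exact congrFun h ⟨i, by omega⟩
    · intro h; funext i; exact h i (by omega)
  have hE1le : ∀ x n i, i ≤ n → (E1 x n).1 ≤ (e (x i) (n - i)).1 := fun x n i hi =>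
    hσ n (fun i => e (x i) (n - i)) ⟨i, by omega⟩
  have hE1s : Function.Surjective E1 := by
    intro d
    let V : ℕ → ℕ → ℕ × ℕ := fun n i => if h : i < n + 1 then (σ n).symm (d n) ⟨i, h⟩ else 0
    choose x hx using fun i => h.bij.2 (fun m => V (i + m) i)
    refine ⟨x, ?_⟩
    funext n
    change σ n _ = _
    rw [← Equiv.eq_symm_apply]
    funext i
    rw [hx]
    have : (i : ℕ) + (n - i) = n := by omega
    simp only [this, V, dif_pos i.2]
  clear_value E1
  let E : (ℕ → S) → ℕ → ℕ := fun x n => if n % 2 = 0 then (E1 x (n/2)).1 else (E1 x (n/2)).2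
  have hEe : ∀ x n, E x (2*n) = (E1 x n).1 := fun x n => by simp [E]
  have hEo : ∀ x n, E x (2*n+1) = (E1 x n).2 := fun x n => by
    have : (2*n+1)/2 = n := by omega
    simp [E, this]
  have hcyl : ∀ p n, {x | ∀ i < n, E1 x i = E1 p i} ∈ nhds p := by
    intro p n
    have : ∀ i ∈ Iio n, ∀ᶠ x in nhds p, ∀ m < n, e (x i) m = e (p i) m := fun i _ =>
      (continuous_apply i).continuousAt.eventually (h.cyl (p i) n)
    have h2 := (Filter.eventually_all_finite (finite_Iio n)).2 this
    filter_upwards [h2] with x hx k hk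
    rw [hE1]
    intro i hi
    exact hx i (show i < n by omega) _ (by omega)
  refine ⟨E, ⟨?_, ?_⟩, ?_, ?_⟩
  · intro x y hxy
    have h1 : ∀ n, E1 x n = E1 y n := fun n =>
      Prod.ext (by rw [← hEe, ← hEe, hxy]) (by rw [← hEo, ← hEo, hxy])
    funext i
    apply h.bij.1
    funext m
    have := (hE1 x y (i+m)).1 (h1 _) i (by omega)
    simpa using this
  · intro d
    obtain ⟨x, hx⟩ := hE1s fun n => (d (2*n), d (2*n+1))
    refine ⟨x, ?_⟩
    funext n
    obtain ⟨m, rfl | rfl⟩ := Nat.even_or_odd' n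
    · rw [hEe, hx]
    · rw [hEo, hx]
  · intro p n
    filter_upwards [hcyl p n] with x hx i hi
    simp only [E]
    rw [hx (i/2) (by omega)]
  · intro p U hU
    rw [nhds_pi, Filter.mem_pi] at hU
    obtain ⟨I, hI, t, ht, hU⟩ := hU
    choose N hN using fun i => h.corner (p i) (t i) (ht i)
    obtain ⟨n, hn⟩ : ∃ n, ∀ i ∈ I, i + N i ≤ n := by
      obtain ⟨n, hn⟩ := (hI.image fun i => i + N i).bddAbove
      exact ⟨n, fun i hi => hn ⟨i, hi, rfl⟩⟩
    have hK : ∀ i, ∃ K, i ∈ I → ∀ x, (∀ j < n - i, e x j = e (p i) j) →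
        K ≤ (e x (n-i)).1 → x ∈ t i := fun i => by
      by_cases hi : i ∈ I
      · obtain ⟨K, hK⟩ := hN i (n - i) (by have := hn i hi; omega)
        exact ⟨K, fun _ => hK⟩
      · exact ⟨0, fun h => absurd h hi⟩
    choose K hK using hK
    obtain ⟨M, hM⟩ : ∃ M, ∀ i ∈ I, K i ≤ M := by
      obtain ⟨n, hn⟩ := (hI.image K).bddAbove
      exact ⟨n, fun i hi => hn ⟨i, hi, rfl⟩⟩
    refine ⟨2 * n, M, fun x hx hMx => hU fun i hi => ?_⟩
    have hin := hn i hi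
    have h1 : ∀ k < n, E1 x k = E1 p k := fun k hk =>
      Prod.ext (by rw [← hEe, ← hEe, hx _ (by omega)]) (by rw [← hEo, ← hEo, hx _ (by omega)])
    refine hK i hi _ (fun j hj => ?_) ?_
    · have := (hE1 x p (i+j)).1 (h1 _ (by omega)) i (by omega)
      simpa using this
    · rw [hEe] at hMx
      exact (hM i hi).trans (hMx.trans (hE1le x n i (by omega)))

/-! ### The tree -/

theorem seqLT_append_singleton (l : List ℕ) (a : ℕ) : seqLT l (l ++ [a]) :=
  ⟨List.prefix_append _ _, by simp⟩

theorem seqLT_length {a b : List ℕ} (h : seqLT a b) : a.length < b.length := by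
  rcases h.1.length_le.lt_or_eq with h1 | h1
  · exact h1
  · exact absurd (h.1.eq_of_length h1) h.2

theorem seqLT_trans {a b c : List ℕ} (h : seqLT a b) (h' : seqLT b c) : seqLT a c :=
  ⟨h.1.trans h'.1, fun e => by
    have := seqLT_length h; have := seqLT_length h'; subst e; omega⟩

/-- comparability -/
theorem seq_comp {a b : List ℕ} : (seqLT a b ∨ a = b ∨ seqLT b a) ↔ (a <+: b ∨ b <+: a) := by
  constructor
  · rintro (h | rfl | h)
    · exact Or.inl h.1
    · exact Or.inl List.prefix_rfl
    · exact Or.inr h.1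
  · intro h
    by_cases hab : a = b
    · exact Or.inr (Or.inl hab)
    · rcases h with h | h
      · exact Or.inl ⟨h, hab⟩
      · exact Or.inr (Or.inr ⟨h, Ne.symm hab⟩)

/-- The foliage tree of a coding. -/
def codeTree {X : Type*} (E : X → ℕ → ℕ) : FoliageTree X where
  Node := List ℕ
  lt := seqLT
  lt_irrefl a h := h.2 rfl
  lt_trans := seqLT_trans
  wellOrdered a := by
    let f : (fun x y : {b // seqLT b a} => seqLT x.1 y.1) ↪r ((· < ·) : ℕ → ℕ → Prop) :=
      { toFun := fun x => x.1.length
        inj' := by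
          intro x y hxy
          apply Subtype.ext
          exact (List.prefix_of_prefix_length_le x.2.1 y.2.1 hxy.le).eq_of_length hxy
        map_rel_iff' := by
          intro x y
          constructor
          · intro h
            change x.1.length < y.1.length at h
            exact ⟨List.prefix_of_prefix_length_le x.2.1 y.2.1 h.le, fun e => by
              rw [e] at h; exact lt_irrefl _ h⟩
          · intro h; exact seqLT_length h }
    exact f.isWellOrder
  leaf l := {x | ∀ i a, l[i]? = some a → E x i = a}

theorem sons_codeTree {X : Type*} (E : X → ℕ → ℕ) (l : List ℕ) :
    (codeTree E).Sons l = range fun a : ℕ => l ++ [a] := by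
  ext s
  constructor
  · rintro ⟨⟨⟨t, rfl⟩, hne⟩, h2⟩
    cases t with
    | nil => simp at hne
    | cons a t =>
      by_cases ht : t = []
      · subst ht; exact ⟨a, rfl⟩
      · exact absurd ⟨l ++ [a], seqLT_append_singleton _ _, ⟨t, by simp⟩, by simpa using Ne.symm ht⟩ h2
  · rintro ⟨a, rfl⟩
    refine ⟨seqLT_append_singleton _ _, ?_⟩
    rintro ⟨t, h1, h2⟩
    have h1 := seqLT_length h1
    have h2 := seqLT_length h2
    simp at h2
    omega

theorem mem_leaf_append {X : Type*} (E : X → ℕ → ℕ) (l : List ℕ) (a : ℕ) (x : X) :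
    x ∈ (codeTree E).leaf (l ++ [a]) ↔ x ∈ (codeTree E).leaf l ∧ E x l.length = a := by
  constructor
  · intro h
    refine ⟨fun i b hb => h i b ?_, h _ _ (by simp)⟩
    rw [List.getElem?_append_left]
    · exact hb
    · exact (List.getElem?_eq_some_iff.1 hb).1
  · rintro ⟨h1, h2⟩ i b hb
    rcases lt_trichotomy i l.length with hi | hi | hi
    · rw [List.getElem?_append_left hi] at hb; exact h1 i b hb
    · subst hi; simp at hb; rw [h2, hb]
    · have := (List.getElem?_eq_some_iff.1 hb).1
      simp at this; omega

theorem isPiTree_codeTree {X : Type*} [TopologicalSpace X] {E : X → ℕ → ℕ} (h : PiCode E) :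
    (codeTree E).IsPiTree := by
  refine ⟨⟨?_, ?_, ⟨RelIso.refl _⟩, ⟨⟨([] : List ℕ)⟩, ?_⟩, ([] : List ℕ), ?_, ?_⟩, ?_⟩
  · intro l
    rw [isOpen_iff_mem_nhds]
    intro p hp
    filter_upwards [h.cyl p (List.length (show List ℕ from l))] with x hx i a hia
    rw [hx i (List.getElem?_eq_some_iff.1 hia).1]
    exact hp i a hia
  · intro l _
    have hs : (codeTree E).Sons l = range fun a : ℕ => (show List ℕ from l) ++ [a] :=
      sons_codeTree E l
    rw [hs]
    constructor
    · ext x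
      simp only [mem_iUnion, exists_prop]
      constructor
      · intro hx
        exact ⟨_, ⟨E x (List.length (show List ℕ from l)), rfl⟩, (mem_leaf_append _ _ _ _).2 ⟨hx, rfl⟩⟩
      · rintro ⟨_, ⟨a, rfl⟩, hx⟩
        exact ((mem_leaf_append _ _ _ _).1 hx).1
    · rintro _ ⟨a, rfl⟩ _ ⟨b, rfl⟩ hab
      rw [Set.disjoint_left]
      intro x hx hy
      apply hab
      have h1 := ((mem_leaf_append _ _ _ _).1 hx).2
      have h2 := ((mem_leaf_append _ _ _ _).1 hy).2
      have hab' : a = b := by rw [← h1, ← h2]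
      rw [hab']
  · intro B hB
    change Set (List ℕ) at B
    have hch : ∀ x ∈ B, ∀ y ∈ B, x <+: y ∨ y <+: x := fun x hx y hy => seq_comp.1 (hB.1 x hx y hy)
    have hmax : ∀ C : Set (List ℕ), (∀ x ∈ C, ∀ y ∈ C, x <+: y ∨ y <+: x) → B ⊆ C → B = C :=
      fun C hC hBC => hB.2 C (fun x hx y hy => seq_comp.2 (hC x hx y hy)) hBC
    have hpre : ∀ l ∈ B, ∀ m, m <+: l → m ∈ B := by
      have := hmax {m | ∃ l ∈ B, m <+: l} ?_ (fun l hl => ⟨l, hl, List.prefix_rfl⟩)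
      · intro l hl m hm
        rw [this]; exact ⟨l, hl, hm⟩
      · rintro x ⟨l, hl, hxl⟩ y ⟨m, hm, hym⟩
        rcases hch l hl m hm with hlm | hlm
        · exact List.prefix_or_prefix_of_prefix (hxl.trans hlm) hym
        · exact List.prefix_or_prefix_of_prefix hxl (hym.trans hlm)
    have hnil : [] ∈ B := by
      have := hmax (insert [] B) ?_ (subset_insert _ _)
      · rw [this]; exact mem_insert _ _
      · rintro x (rfl | hx) y (rfl | hy)
        · simp
        · simp
        · simp
        · exact hch x hx y hy
    have hlen : ∀ n : ℕ, ∃ l ∈ B, l.length = n := by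
      intro n
      induction n with
      | zero => exact ⟨[], hnil, rfl⟩
      | succ n ih =>
        obtain ⟨l, hl, hln⟩ := ih
        by_contra hcon
        push Not at hcon
        have hB' : ∀ m ∈ B, m <+: l := by
          intro m hm
          rcases hch l hl m hm with hlm | hlm
          · by_cases hle : m.length ≤ n
            · rw [hlm.eq_of_length_le (by omega)]
            · exact absurd (by simp; omega) (hcon (m.take (n+1)) (hpre m hm _ (List.take_prefix _ _)))
          · exact hlm
        have := hmax (insert (l ++ [0]) B) ?_ (subset_insert _ _)
        · exact hcon (l ++ [0]) (by rw [this]; exact mem_insert _ _) (by simp [hln])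
        · rintro x (rfl | hx) y (rfl | hy)
          · simp
          · exact Or.inr ((hB' y hy).trans (List.prefix_append _ _))
          · exact Or.inl ((hB' x hx).trans (List.prefix_append _ _))
          · exact hch x hx y hy
    choose L hLB hLl using hlen
    have hLn : ∀ n, ∃ a, (L (n+1))[n]? = some a := fun n =>
      ⟨(L (n+1))[n]'(by rw [hLl]; omega), by simp⟩
    choose f hf using hLn
    obtain ⟨p, hp⟩ := h.bij.2 f
    refine ⟨p, ?_⟩
    ext q
    simp only [mem_iInter, mem_singleton_iff]
    constructor
    · intro hq
      apply h.bij.1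
      rw [hp]
      funext n
      exact hq (L (n+1)) (hLB _) n _ (hf n)
    · rintro rfl l hl i a hia
      rw [hp]
      change List ℕ at l
      have h1 := hf i
      have hi1 := (List.getElem?_eq_some_iff.1 hia).1
      have : l[i]? = (L (i+1))[i]? := by
        rcases hch l hl _ (hLB (i+1)) with hc | hc
        · obtain ⟨t, ht⟩ := hc
          rw [← ht, List.getElem?_append_left hi1]
        · obtain ⟨t, ht⟩ := hc
          rw [← ht, List.getElem?_append_left (by rw [hLl]; omega)]
      have hia' : l[i]? = some a := hia
      rw [this, h1] at hia'
      exact Option.some.inj hia'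
  · intro l
    by_cases hl : (show List ℕ from l) = []
    · exact Or.inl hl.symm
    · exact Or.inr ⟨List.nil_prefix, Ne.symm hl⟩
  · ext x
    simp [codeTree]
  · intro p U hU
    obtain ⟨n, K, hK⟩ := h.corner p U hU
    let l : List ℕ := List.ofFn fun i : Fin n => E p i
    have hll : l.length = n := by simp [l]
    have hl : ∀ x, x ∈ (codeTree E).leaf l ↔ ∀ i < n, E x i = E p i := by
      intro x
      constructor
      · intro hx i hi
        exact hx i _ (by simp [l, hi])
      · intro hx i a hia
        have hi := (List.getElem?_eq_some_iff.1 hia).1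
        rw [hll] at hi
        rw [hx i hi]
        simpa [l, List.getElem?_ofFn, hi] using hia
    refine ⟨l, (hl p).2 fun _ _ => rfl, ?_⟩
    rintro _ rfl _
    refine ⟨_, ⟨(fun a : ℕ => l ++ [a]) '' Ici K, ?_, ?_, rfl⟩, ?_, ?_⟩
    · rw [sons_codeTree]; exact image_subset_range _ _
    · rw [sons_codeTree]
      refine ((finite_Iio K).image fun a : ℕ => l ++ [a]).subset ?_
      rintro _ ⟨⟨a, rfl⟩, ha⟩
      refine ⟨a, ?_, rfl⟩
      by_contra hc
      exact ha ⟨a, mem_Ici.2 (not_lt.1 hc), rfl⟩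
    · obtain ⟨x, hx⟩ := h.bij.2 fun i => if i < n then E p i else K
      refine ⟨x, mem_iUnion₂.2 ⟨l ++ [K], ⟨K, mem_Ici.2 le_rfl, rfl⟩, (mem_leaf_append _ _ _ _).2 ⟨?_, ?_⟩⟩⟩
      · rw [hl]; intro i hi; rw [hx]; simp [hi]
      · rw [hx]; simp [hll]
    · intro x hx
      obtain ⟨_, ⟨a, ha, rfl⟩, hx⟩ := mem_iUnion₂.1 hx
      obtain ⟨h1, h2⟩ := (mem_leaf_append _ _ _ _).1 hx
      rw [hll] at h2
      exact hK x ((hl x).1 h1) (by rw [h2]; exact ha)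

/-! ### The Sorgenfrey line -/

theorem sorg_nhds (p : SorgLine) (U : Set SorgLine) :
    U ∈ nhds p ↔ ∃ ε > (0:ℝ), ∀ x : SorgLine, (show ℝ from p) ≤ (show ℝ from x) →
      (show ℝ from x) < (show ℝ from p) + ε → x ∈ U := by
  constructor
  · intro hU
    obtain ⟨V, hVU, hV, hpV⟩ := mem_nhds_iff.1 hU
    suffices h : ∃ ε > (0:ℝ), ∀ x : SorgLine, (show ℝ from p) ≤ (show ℝ from x) →
        (show ℝ from x) < (show ℝ from p) + ε → x ∈ V by
      obtain ⟨ε, hε, h⟩ := h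
      exact ⟨ε, hε, fun x h1 h2 => hVU (h x h1 h2)⟩
    clear hVU hU
    have hV' : TopologicalSpace.GenerateOpen {s : Set ℝ | ∃ a b : ℝ, s = Set.Ico a b} V := hV
    clear hV
    induction hV' with
    | basic s hs =>
      obtain ⟨a, b, rfl⟩ := hs
      have hp : a ≤ (show ℝ from p) ∧ (show ℝ from p) < b := hpV
      refine ⟨b - (show ℝ from p), sub_pos.2 hp.2, fun x h1 h2 => ?_⟩
      have h3 : (show ℝ from x) < b := by linarith
      exact ⟨hp.1.trans h1, h3⟩
    | univ => exact ⟨1, one_pos, fun _ _ _ => trivial⟩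
    | inter s t _ _ ihs iht =>
      obtain ⟨ε, hε, h⟩ := ihs hpV.1
      obtain ⟨δ, hδ, h'⟩ := iht hpV.2
      refine ⟨min ε δ, lt_min hε hδ, fun x h1 h2 => ⟨h x h1 ?_, h' x h1 ?_⟩⟩
      · linarith [min_le_left ε δ]
      · linarith [min_le_right ε δ]
    | sUnion S _ ih =>
      obtain ⟨s, hs, hps⟩ := hpV
      obtain ⟨ε, hε, h⟩ := ih s hs hps
      exact ⟨ε, hε, fun x h1 h2 => ⟨s, hs, h x h1 h2⟩⟩
  · rintro ⟨ε, hε, h⟩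
    have hop : IsOpen (X := SorgLine) (Set.Ico (show ℝ from p) ((show ℝ from p) + ε) : Set ℝ) :=
      TopologicalSpace.isOpen_generateFrom_of_mem ⟨_, _, rfl⟩
    have hp : p ∈ (Set.Ico (show ℝ from p) ((show ℝ from p) + ε) : Set ℝ) :=
      ⟨le_refl (show ℝ from p), lt_add_of_pos_right (show ℝ from p) hε⟩
    refine Filter.mem_of_superset (hop.mem_nhds hp) fun x hx => h x hx.1 hx.2

theorem irr_nhds (p : ↥IrrSorg) (U : Set ↥IrrSorg) :
    U ∈ nhds p ↔ ∃ ε > (0:ℝ), ∀ x : ↥IrrSorg, (show ℝ from p.1) ≤ (show ℝ from x.1) →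
      (show ℝ from x.1) < (show ℝ from p.1) + ε → x ∈ U := by
  rw [mem_nhds_subtype]
  constructor
  · rintro ⟨V, hV, hVU⟩
    obtain ⟨ε, hε, h⟩ := (sorg_nhds _ _).1 hV
    exact ⟨ε, hε, fun x h1 h2 => hVU (h x.1 h1 h2)⟩
  · rintro ⟨ε, hε, h⟩
    refine ⟨{x | (show ℝ from p.1) ≤ (show ℝ from x) ∧
      (show ℝ from x) < (show ℝ from p.1) + ε}, ?_, fun x hx => h x hx.1 hx.2⟩
    exact (sorg_nhds _ _).2 ⟨ε, hε, fun x h1 h2 => ⟨h1, h2⟩⟩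

/-- affine maps of `[0,1)` onto `[k/(k+1), (k+1)/(k+2))` -/
noncomputable def affH (k : ℕ) (u : ℝ) : ℝ := 1 - 1 / ((k:ℝ) + 1) + u * (1 / ((k + 1) * (k + 2)))

theorem affH_le (k : ℕ) {u : ℝ} (hu : u ≤ 1) : affH k u ≤ 1 - 1 / ((k:ℝ) + 2) := by
  have h0 : (0:ℝ) ≤ k := k.cast_nonneg
  have : 1 - 1 / ((k:ℝ) + 2) = affH k 1 := by unfold affH; field_simp; ring
  rw [this]
  unfold affH
  gcongr

theorem affH_lt (k : ℕ) {u : ℝ} (hu : u < 1) : affH k u < 1 - 1 / ((k:ℝ) + 2) := by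
  have h0 : (0:ℝ) ≤ k := k.cast_nonneg
  have : 1 - 1 / ((k:ℝ) + 2) = affH k 1 := by unfold affH; field_simp; ring
  rw [this]
  unfold affH
  gcongr

theorem le_affH (k : ℕ) {u : ℝ} (hu : 0 ≤ u) : 1 - 1 / ((k:ℝ) + 1) ≤ affH k u := by
  unfold affH
  have : 0 ≤ u * (1 / (((k:ℝ) + 1) * (k + 2))) := by positivity
  linarith

theorem affH_strictMono (k : ℕ) : StrictMono (affH k) := by
  intro a b hab
  unfold affH
  gcongr

theorem affH_map (k : ℕ) {u : ℝ} (hu : u ∈ Icc (0:ℝ) 1) : affH k u ∈ Ico (0:ℝ) 1 := by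
  have h0 : (0:ℝ) ≤ k := k.cast_nonneg
  constructor
  · refine le_trans ?_ (le_affH k hu.1)
    rw [sub_nonneg, div_le_one (by positivity)]; linarith
  · refine (affH_le k hu.2).trans_lt ?_
    have : 0 < 1 / ((k:ℝ) + 2) := by positivity
    linarith

theorem affH_contr (k : ℕ) (u w : ℝ) : |affH k u - affH k w| ≤ 2⁻¹ * |u - w| := by
  have h0 : (0:ℝ) ≤ k := k.cast_nonneg
  have : affH k u - affH k w = 1 / (((k:ℝ) + 1) * (k + 2)) * (u - w) := by unfold affH; ring
  rw [this, abs_mul, abs_of_nonneg (by positivity)]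
  refine mul_le_mul_of_nonneg_right ?_ (abs_nonneg _)
  rw [inv_eq_one_div]
  apply one_div_le_one_div_of_le (by norm_num)
  nlinarith

theorem affH_inj {k l : ℕ} {u w : ℝ} (hu : u ∈ Ico (0:ℝ) 1) (hw : w ∈ Ico (0:ℝ) 1)
    (h : affH k u = affH l w) : k = l ∧ u = w := by
  have key : ∀ {k l : ℕ} {u w : ℝ}, u ∈ Ico (0:ℝ) 1 → w ∈ Ico (0:ℝ) 1 →
      affH k u = affH l w → ¬ k < l := by
    intro k l u w hu hw h hkl
    have h1 := affH_lt k hu.2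
    have h2 := le_affH l hw.1
    have h3 : (k:ℝ) + 1 ≤ l := by exact_mod_cast hkl
    have h0 : (0:ℝ) ≤ k := k.cast_nonneg
    have h4 : 1 / ((l:ℝ) + 1) ≤ 1 / ((k:ℝ) + 2) :=
      one_div_le_one_div_of_le (by positivity) (by linarith)
    linarith
  have hkl : k = l := le_antisymm (not_lt.1 (key hw hu h.symm)) (not_lt.1 (key hu hw h))
  subst hkl
  exact ⟨rfl, (affH_strictMono k).injective h⟩

theorem affH_surj {x : ℝ} (hx : x ∈ Ico (0:ℝ) 1) : ∃ k, ∃ u ∈ Ico (0:ℝ) 1, affH k u = x := by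
  have hpos : 0 < 1 - x := by linarith [hx.2]
  have h1 : 1 ≤ 1 / (1 - x) := by rw [le_div_iff₀ hpos]; linarith [hx.1]
  obtain ⟨k, hk⟩ : ∃ k : ℕ, k = ⌊1 / (1 - x) - 1⌋₊ := ⟨_, rfl⟩
  have hk1 : (k:ℝ) ≤ 1 / (1 - x) - 1 := by rw [hk]; exact Nat.floor_le (by linarith)
  have hk2 : 1 / (1 - x) - 1 < k + 1 := by rw [hk]; exact Nat.lt_floor_add_one _
  have h0 : (0:ℝ) ≤ k := k.cast_nonneg
  have hk1' : ((k:ℝ) + 1) * (1 - x) ≤ 1 := by rw [← le_div_iff₀ hpos]; linarith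
  have hk2' : 1 < ((k:ℝ) + 2) * (1 - x) := by rw [← div_lt_iff₀ hpos]; linarith
  refine ⟨k, (1 - (k + 1) * (1 - x)) * (k + 2), ⟨?_, ?_⟩, ?_⟩
  · exact mul_nonneg (by linarith) (by linarith)
  · nlinarith
  · unfold affH; field_simp; ring

theorem ifs_real : IFS (Ico 0 1) (fun d w => affH d.1 (affH d.2 w)) where
  hY := subset_rfl
  hmap d w hw := affH_map _ (Ico_subset_Icc_self (affH_map _ hw))
  hmono d := ((affH_strictMono _).comp (affH_strictMono _)).strictMonoOn _
  hcontr d u _ w _ := by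
    refine (affH_contr _ _ _).trans ?_
    have := affH_contr d.2 u w
    have := abs_nonneg (u - w)
    linarith
  hcov y hy := by
    obtain ⟨k, u, hu, rfl⟩ := affH_surj hy
    obtain ⟨j, w, hw, rfl⟩ := affH_surj hu
    exact ⟨(k, j), w, hw, rfl⟩
  hinj d d' w hw w' hw' h := by
    obtain ⟨h1, h2⟩ := affH_inj (affH_map _ (Ico_subset_Icc_self hw))
      (affH_map _ (Ico_subset_Icc_self hw')) h
    exact Prod.ext h1 (affH_inj hw hw' h2).1
  hback d w hw hw1 _ := ⟨hw.1, hw1⟩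
  hcorner t ht := by
    obtain ⟨K, hK⟩ := exists_nat_one_div_lt (sub_pos.2 ht)
    refine ⟨K, fun d hd w hw => ?_⟩
    have h1 := le_affH d.1 (affH_map d.2 (Ico_subset_Icc_self hw)).1
    have h2 : 1 / ((d.1:ℝ) + 1) ≤ 1 / ((K:ℝ) + 1) :=
      one_div_le_one_div_of_le (by positivity) (by gcongr)
    linarith
  hlim d x hx hs := by
    rw [hs 0]; exact affH_map _ (Ico_subset_Icc_self (affH_map _ (hx _)))

/-! ### The irrational case -/

/-- first map -/
noncomputable def mobH (k : ℕ) (u : ℝ) : ℝ := 1 - 1 / (k + 1 + u)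

/-- second map -/
noncomputable def mobM (j : ℕ) (w : ℝ) : ℝ := 1 / (j + 2 - w)

theorem mobM_map (j : ℕ) {w : ℝ} (hw : w ∈ Icc (0:ℝ) 1) : 0 < mobM j w ∧ mobM j w ≤ 1 := by
  have h0 : (0:ℝ) ≤ j := j.cast_nonneg
  have : 0 < (j:ℝ) + 2 - w := by linarith [hw.2]
  unfold mobM
  refine ⟨by positivity, ?_⟩
  rw [div_le_one this]; linarith [hw.2]

theorem mobM_lt (j : ℕ) {w : ℝ} (hw : w ∈ Ico (0:ℝ) 1) : mobM j w < 1 := by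
  have h0 : (0:ℝ) ≤ j := j.cast_nonneg
  have : 0 < (j:ℝ) + 2 - w := by linarith [hw.2]
  unfold mobM
  rw [div_lt_one this]; linarith [hw.2]

theorem mobH_map (k : ℕ) {u : ℝ} (hu : 0 < u) : mobH k u ∈ Ioo (0:ℝ) 1 := by
  have h0 : (0:ℝ) ≤ k := k.cast_nonneg
  have h1 : 0 < (k:ℝ) + 1 + u := by linarith
  unfold mobH
  refine ⟨?_, ?_⟩
  · rw [sub_pos, div_lt_one h1]; linarith
  · have : 0 < 1 / ((k:ℝ) + 1 + u) := by positivity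
    linarith

theorem mobM_irr (j : ℕ) (w : ℝ) : Irrational (mobM j w) ↔ Irrational w := by
  unfold mobM
  rw [one_div, irrational_inv_iff]
  have : (j:ℝ) + 2 - w = ((j + 2 : ℕ) : ℝ) - w := by push_cast; ring
  rw [this, irrational_natCast_sub_iff]

theorem mobH_irr (k : ℕ) (u : ℝ) : Irrational (mobH k u) ↔ Irrational u := by
  unfold mobH
  have h1 : (1:ℝ) - 1 / ((k:ℝ) + 1 + u) = ((1:ℕ):ℝ) - (((k + 1 : ℕ):ℝ) + u)⁻¹ := by
    push_cast; rw [one_div]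
  rw [h1, irrational_natCast_sub_iff, irrational_inv_iff, irrational_natCast_add_iff]

theorem mobH_inj {k l : ℕ} {u w : ℝ} (hu : u ∈ Ioo (0:ℝ) 1) (hw : w ∈ Ioo (0:ℝ) 1)
    (h : mobH k u = mobH l w) : k = l ∧ u = w := by
  unfold mobH at h
  have h1 : (k:ℝ) + 1 + u = l + 1 + w := by
    rw [one_div, one_div] at h
    exact inv_injective (by linarith)
  have hk : ⌊(k:ℝ) + u⌋₊ = k := by
    rw [Nat.floor_eq_iff (by have := hu.1; positivity)]; constructor <;> linarith [hu.1, hu.2]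
  have hl : ⌊(l:ℝ) + w⌋₊ = l := by
    rw [Nat.floor_eq_iff (by have := hw.1; positivity)]; constructor <;> linarith [hw.1, hw.2]
  have h2 : (k:ℝ) + u = l + w := by linarith
  have hkl : k = l := by rw [← hk, ← hl, h2]
  subst hkl
  exact ⟨rfl, by linarith⟩

theorem mobM_inj {k l : ℕ} {u w : ℝ} (hu : u ∈ Ioo (0:ℝ) 1) (hw : w ∈ Ioo (0:ℝ) 1)
    (h : mobM k u = mobM l w) : k = l := by
  unfold mobM at h
  have h1 : (k:ℝ) + 2 - u = l + 2 - w := by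
    rw [one_div, one_div] at h
    exact inv_injective h
  have hu' : 1 - u ∈ Ioo (0:ℝ) 1 := ⟨by linarith [hu.2], by linarith [hu.1]⟩
  have hw' : 1 - w ∈ Ioo (0:ℝ) 1 := ⟨by linarith [hw.2], by linarith [hw.1]⟩
  refine (mobH_inj hu' hw' ?_).1
  unfold mobH
  congr 2
  linarith

theorem ioo_of_irr {x : ℝ} (hx : x ∈ Icc (0:ℝ) 1) (h : Irrational x) : x ∈ Ioo (0:ℝ) 1 :=
  ⟨lt_of_le_of_ne hx.1 (Ne.symm (h.ne_zero)), lt_of_le_of_ne hx.2 h.ne_one⟩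

theorem mobH_surj {x : ℝ} (hx : x ∈ Ioo (0:ℝ) 1) (hi : Irrational x) :
    ∃ k, ∃ u ∈ Ioo (0:ℝ) 1, Irrational u ∧ mobH k u = x := by
  have hpos : 0 < 1 - x := by linarith [hx.2]
  have h1 : 1 ≤ 1 / (1 - x) := by rw [le_div_iff₀ hpos]; linarith [hx.1]
  obtain ⟨k, hk⟩ : ∃ k : ℕ, k = ⌊1 / (1 - x) - 1⌋₊ := ⟨_, rfl⟩
  have hk1 : (k:ℝ) ≤ 1 / (1 - x) - 1 := by rw [hk]; exact Nat.floor_le (by linarith)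
  have hk2 : 1 / (1 - x) - 1 < k + 1 := by rw [hk]; exact Nat.lt_floor_add_one _
  have he : mobH k (1 / (1 - x) - 1 - k) = x := by
    unfold mobH
    have : (k:ℝ) + 1 + (1 / (1 - x) - 1 - k) = 1 / (1 - x) := by ring
    rw [this, one_div_one_div]; ring
  have hir : Irrational (1 / (1 - x) - 1 - k) := by rw [← mobH_irr k, he]; exact hi
  exact ⟨k, _, ioo_of_irr ⟨by linarith, by linarith⟩ hir, hir, he⟩

theorem mobM_surj {x : ℝ} (hx : x ∈ Ioo (0:ℝ) 1) (hi : Irrational x) :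
    ∃ k, ∃ u ∈ Ioo (0:ℝ) 1, Irrational u ∧ mobM k u = x := by
  have hx' : 1 - x ∈ Ioo (0:ℝ) 1 := ⟨by linarith [hx.2], by linarith [hx.1]⟩
  have hi' : Irrational (1 - x) := by
    have := (irrational_natCast_sub_iff (n := 1) (x := x)).2 hi
    simpa using this
  obtain ⟨k, u, hu, hui, h⟩ := mobH_surj hx' hi'
  have he : mobM k (1 - u) = x := by
    have : mobM k (1 - u) = 1 - mobH k u := by
      unfold mobM mobH
      have : (k:ℝ) + 2 - (1 - u) = k + 1 + u := by ring
      rw [this]; ring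
    rw [this, h]; ring
  refine ⟨k, 1 - u, ⟨by linarith [hu.2], by linarith [hu.1]⟩, ?_, he⟩
  rw [← mobM_irr k, he]; exact hi

theorem mob_diff (k j : ℕ) {u w : ℝ} (hu : u ∈ Icc (0:ℝ) 1) (hw : w ∈ Icc (0:ℝ) 1) :
    ∃ c : ℝ, 0 < c ∧ c ≤ 2⁻¹ ∧ mobH k (mobM j u) - mobH k (mobM j w) = c * (u - w) := by
  have h0 : (0:ℝ) ≤ k := k.cast_nonneg
  have h0' : (0:ℝ) ≤ j := j.cast_nonneg
  have hu1 : 1 ≤ (j:ℝ) + 2 - u := by linarith [hu.2]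
  have hw1 : 1 ≤ (j:ℝ) + 2 - w := by linarith [hw.2]
  have hA : 2 ≤ ((k:ℝ) + 1) * (j + 2 - u) + 1 := by nlinarith
  have hB : 2 ≤ ((k:ℝ) + 1) * (j + 2 - w) + 1 := by nlinarith
  have e : ∀ v : ℝ, 1 ≤ (j:ℝ) + 2 - v → mobH k (mobM j v) =
      1 - (j + 2 - v) / (((k:ℝ) + 1) * (j + 2 - v) + 1) := by
    intro v hv
    unfold mobH mobM
    have h1 : (j:ℝ) + 2 - v ≠ 0 := by linarith
    have h3 : (k:ℝ) + 1 + 1 / (j + 2 - v) = (((k:ℝ) + 1) * (j + 2 - v) + 1) / (j + 2 - v) := by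
      field_simp
    rw [h3, one_div_div]
  refine ⟨1 / ((((k:ℝ) + 1) * (j + 2 - u) + 1) * (((k:ℝ) + 1) * (j + 2 - w) + 1)),
    by positivity, ?_, ?_⟩
  · rw [inv_eq_one_div]
    apply one_div_le_one_div_of_le (by norm_num)
    nlinarith
  · rw [e u hu1, e w hw1]
    have hA0 : ((k:ℝ) + 1) * (j + 2 - u) + 1 ≠ 0 := by linarith
    have hB0 : ((k:ℝ) + 1) * (j + 2 - w) + 1 ≠ 0 := by linarith
    generalize hAA : ((k:ℝ) + 1) * (j + 2 - u) + 1 = A at *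
    generalize hBB : ((k:ℝ) + 1) * (j + 2 - w) + 1 = B at *
    field_simp
    rw [← hAA, ← hBB]
    ring

theorem mob_descent (d : ℕ → ℕ × ℕ) (x : ℕ → ℝ) (hx : ∀ n, x n ∈ Icc (0:ℝ) 1)
    (hs : ∀ n, x n = mobH (d n).1 (mobM (d n).2 (x (n+1)))) :
    ∀ (q : ℕ) (n : ℕ) (p : ℤ), 0 < q → x n * q = p → False := by
  intro q
  induction q using Nat.strong_induction_on with
  | _ q ih =>
    intro n p hq hp
    have hq' : (0:ℝ) < q := by exact_mod_cast hq
    have hu := mobM_map (d n).2 (hx (n+1))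
    have hxn := mobH_map (d n).1 hu.1
    rw [← hs n] at hxn
    obtain ⟨k, hk⟩ : ∃ k, k = (d n).1 := ⟨_, rfl⟩
    obtain ⟨j, hj⟩ : ∃ j, j = (d n).2 := ⟨_, rfl⟩
    have h := hs n
    rw [← hk, ← hj] at h
    rw [← hj] at hu
    obtain ⟨u, hu'⟩ : ∃ u, u = mobM j (x (n+1)) := ⟨_, rfl⟩
    rw [← hu'] at h hu
    have h0 : (0:ℝ) ≤ k := k.cast_nonneg
    have h0' : (0:ℝ) ≤ j := j.cast_nonneg
    have hk0 : (k:ℝ) + 1 + u ≠ 0 := by linarith [hu.1]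
    have hj0 : (j:ℝ) + 2 - x (n+1) ≠ 0 := by linarith [(hx (n+1)).2]
    -- (1 - x)(k+1+u) = 1
    have h1 : (1 - x n) * (k + 1 + u) = 1 := by
      rw [h]; unfold mobH; field_simp; ring
    have h2 : u * (j + 2 - x (n+1)) = 1 := by
      rw [hu']; unfold mobM; field_simp
    -- numerators
    have hp1 : ((q - p : ℤ) : ℝ) = (1 - x n) * q := by push_cast; rw [← hp]; ring
    have hp1pos : (0:ℝ) < ((q - p : ℤ) : ℝ) := by
      rw [hp1]; exact mul_pos (by linarith [hxn.2]) hq'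
    have hp1lt : ((q - p : ℤ) : ℝ) < q := by rw [hp1]; nlinarith [hxn.1]
    have ha : ((q - (k + 1) * (q - p) : ℤ) : ℝ) = u * ((q - p : ℤ) : ℝ) := by
      have : (((q - (k + 1) * (q - p) : ℤ)) : ℝ) = q - (k + 1) * ((q - p : ℤ) : ℝ) := by
        push_cast; ring
      rw [this, hp1]
      linear_combination (-(q:ℝ)) * h1
    generalize (q - (k + 1) * (q - p) : ℤ) = a at ha
    have hapos : (0:ℝ) < (a:ℝ) := by rw [ha]; exact mul_pos hu.1 hp1pos
    have hale : (a:ℝ) ≤ ((q - p : ℤ) : ℝ) := by rw [ha]; nlinarith [hu.2]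
    have hapos' : 0 < a := by exact_mod_cast hapos
    obtain ⟨b, rfl⟩ := Int.eq_ofNat_of_zero_le hapos'.le
    have hbq : ((b:ℤ):ℝ) < q := hale.trans_lt hp1lt
    refine ih b (by exact_mod_cast hbq) (n+1) ((j + 2) * b - (q - p)) (by exact_mod_cast hapos') ?_
    have hcast : (((j + 2) * b - (q - p) : ℤ) : ℝ) = (j + 2) * ((b:ℤ):ℝ) - ((q - p : ℤ) : ℝ) := by
      push_cast; ring
    rw [hcast]
    have hb : ((b:ℕ):ℝ) = ((b:ℤ):ℝ) := by push_cast; rfl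
    rw [hb, ha]
    linear_combination (-((q - p : ℤ) : ℝ)) * h2

theorem mob_lim (d : ℕ → ℕ × ℕ) (x : ℕ → ℝ) (hx : ∀ n, x n ∈ Icc (0:ℝ) 1)
    (hs : ∀ n, x n = mobH (d n).1 (mobM (d n).2 (x (n+1)))) : Irrational (x 0) := by
  rintro ⟨r, hr⟩
  refine mob_descent d x hx hs r.den 0 r.num r.pos ?_
  rw [← hr]
  exact_mod_cast Rat.mul_den_eq_num r

theorem ifs_irr : IFS {x | x ∈ Ico (0:ℝ) 1 ∧ Irrational x} (fun d w => mobH d.1 (mobM d.2 w)) where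
  hY x hx := hx.1
  hmap d w hw := Ioo_subset_Ico_self (mobH_map _ (mobM_map _ hw).1)
  hmono d u hu w hw huw := by
    obtain ⟨c, hc, _, h⟩ := mob_diff d.1 d.2 hw hu
    have : 0 < c * (w - u) := mul_pos hc (by linarith)
    simp only
    linarith
  hcontr d u hu w hw := by
    obtain ⟨c, hc, hc2, h⟩ := mob_diff d.1 d.2 hu hw
    simp only [h, abs_mul, abs_of_pos hc]
    exact mul_le_mul_of_nonneg_right hc2 (abs_nonneg _)
  hcov y hy := by
    obtain ⟨k, u, hu, hui, rfl⟩ := mobH_surj (ioo_of_irr (Ico_subset_Icc_self hy.1) hy.2) hy.2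
    obtain ⟨j, w, hw, hwi, rfl⟩ := mobM_surj hu hui
    exact ⟨(k, j), w, ⟨Ioo_subset_Ico_self hw, hwi⟩, rfl⟩
  hinj d d' w hw w' hw' h := by
    have hm : ∀ j : ℕ, ∀ w : ℝ, w ∈ Ico (0:ℝ) 1 → mobM j w ∈ Ioo (0:ℝ) 1 := fun j w hw =>
      ⟨(mobM_map j (Ico_subset_Icc_self hw)).1, mobM_lt j hw⟩
    obtain ⟨h1, h2⟩ := mobH_inj (hm _ _ hw.1) (hm _ _ hw'.1) h
    exact Prod.ext h1 (mobM_inj (ioo_of_irr (Ico_subset_Icc_self hw.1) hw.2)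
      (ioo_of_irr (Ico_subset_Icc_self hw'.1) hw'.2) h2)
  hback d w hw hw1 h := ⟨⟨hw.1, hw1⟩, (mobM_irr _ _).1 ((mobH_irr _ _).1 h.2)⟩
  hcorner t ht := by
    obtain ⟨K, hK⟩ := exists_nat_one_div_lt (sub_pos.2 ht)
    refine ⟨K, fun d hd w hw => ?_⟩
    have hu := (mobM_map d.2 (Ico_subset_Icc_self hw.1)).1
    have hd' : (K:ℝ) ≤ d.1 := by exact_mod_cast hd
    have h2 : 1 / ((d.1:ℝ) + 1 + mobM d.2 w) ≤ 1 / ((K:ℝ) + 1) :=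
      one_div_le_one_div_of_le (by positivity) (by linarith)
    simp only [mobH]
    linarith
  hlim d x hx hs := by
    refine ⟨?_, mob_lim d x hx hs⟩
    rw [hs 0]; exact Ioo_subset_Ico_self (mobH_map _ (mobM_map _ (hx _)).1)

theorem irrational_fract_iff (x : ℝ) : Irrational (Int.fract x) ↔ Irrational x := by
  unfold Int.fract
  exact irrational_sub_intCast_iff

/-- Countable powers of the Sorgenfrey line and of the irrational Sorgenfrey
line have π-trees. -/
theorem countable_powers_of_sorgenfrey_have_piTree :
    (∃ F : FoliageTree (ℕ → SorgLine), F.IsPiTree) ∧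
      ∃ F : FoliageTree (ℕ → ↥IrrSorg), F.IsPiTree := by
  constructor
  · obtain ⟨e, he⟩ := exists_goodCode ifs_real (S := SorgLine) (fun x => (show ℝ from x))
      (fun a b h => h)
      (fun x => ⟨fun _ => ⟨Int.fract_nonneg x, Int.fract_lt_one x⟩, fun _ => ⟨x, rfl⟩⟩) sorg_nhds
    obtain ⟨E, hE⟩ := exists_piCode he
    exact ⟨_, isPiTree_codeTree hE⟩
  · have hr : ∀ x : ℝ, x ∈ range (fun x : ↥IrrSorg => (show ℝ from x.1)) ↔
        Int.fract x ∈ {x | x ∈ Ico (0:ℝ) 1 ∧ Irrational x} := by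
      intro x
      constructor
      · rintro ⟨y, rfl⟩
        exact ⟨⟨Int.fract_nonneg _, Int.fract_lt_one _⟩, (irrational_fract_iff _).2 y.2⟩
      · intro h
        exact ⟨⟨x, (irrational_fract_iff _).1 h.2⟩, rfl⟩
    obtain ⟨e, he⟩ := exists_goodCode ifs_irr (S := ↥IrrSorg) (fun x => (show ℝ from x.1))
      (fun a b h => Subtype.ext h) hr irr_nhds
    obtain ⟨E, hE⟩ := exists_piCode he
    exact ⟨_, isPiTree_codeTree hE⟩
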